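/- In the REPS setting, suppose the minimal-visitation assumption holds with constant ρ > 0, |S| ≥ 2, and J_D attains its infimum over ℝ^S. Let D = (1/(1−γ))·(1 + log(|S||A|/(βρ))/η), and let ṽ : S → ℝ satisfy max_s |ṽ_s| ≤ D and J_D(ṽ) ≤ inf_v J_D(v) + ε for some ε > 0. Let λ̃ = λ^ṽ be the candidate primal solution of ṽ, define π̃(a|s) = λ̃_{s,a}/Σ_{a'} λ̃_{s,a'}, and let λ' ∈ Λ be any feasible point with λ'_{s,a} = (Σ_{a'} λ'_{s,a'})·π̃(a|s) for all (s,a). Let λ*_η be a maximizer of J_P over Λ. Then J_P(λ') ≥ J_P(λ*_η) − (2√((|S|+1)·η·ε)/(1−γ))·(2 + (1 + log(|S||A|/(β²ρ⁴)))/η). -/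

import Mathlib

/-! Write `λ̃` for the candidate solution of `ṽ`, `d̃` and `d'` for the state marginals of `λ̃` and
`λ'`, and `g` for the amount by which `λ̃` violates the flow constraints (`flowResid`); `g` is also
the gradient of `J_D` at `ṽ`.

* **Small gradient.** `J_D` is smooth for the sup norm: moving `ṽ` by `w` changes the advantages
  by at most `2‖w‖_∞`, and a second-order bound on `log E exp X` (`log_sum_exp_le`) controls the
  log-partition function. A step of size `‖g‖₁ / (6η)` against the signs of `g` decreases `J_D` by
  at least `‖g‖₁² / (12η)`, so `ε`-optimality gives `‖g‖₁² ≤ 12ηε ≤ 4(|S|+1)ηε`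
  (`flowResid_sq_le`); this is where `|S| ≥ 2` enters.
* **Stability.** `λ̃` and `λ'` have the same conditional policy, and the discounted transition
  operator of that policy is a `γ`-contraction in `ℓ¹`, so `(1-γ)‖d' - d̃‖₁ ≤ ‖g‖₁`
  (`marginal_dist_le`).
* **Duality.** For feasible `λ`, `J_D(v) - J_P(λ) = KL(λ ‖ λ^v) / η` (`dual_sub_primal`). Hence
  `J_P(λ*) ≤ J_D(ṽ)`, and the gap of `λ'` is at most `KL(λ' ‖ λ̃) / η`, which is at most
  `(1/η) Σ (λ' - λ̃) log(λ'/λ̃)`. Expanding `log λ̃` turns this sum into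
  `Σ_s (d' - d̃)_s H_s + η Σ_s ṽ_s g_s`, where
  `H_s = Σ_a π̃(a|s) (log(d'_s π̃(a|s) / q_{s,a}) - η r_{s,a})` satisfies
  `|H_s| ≤ η + log(1/β) + log(1/ρ)`.
  Only the lower bound `d' ≥ ρ` is used here, never a lower bound on `λ̃`. -/

/-! ### The REPS objectives -/

/-- Advantage function `A^v_{s,a} = r_{s,a} - v_s + γ Σ_{s'} P(s'|s,a) v_{s'}`
(here `P s a s' = P(s'|s,a)`). -/
noncomputable def Adv {S A : Type*} [Fintype S] (P : S → A → S → ℝ) (r : S → A → ℝ)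
    (γ : ℝ) (v : S → ℝ) (s : S) (a : A) : ℝ :=
  r s a - v s + γ * ∑ s', P s a s' * v s'

/-- REPS dual objective. -/
noncomputable def JD {S A : Type*} [Fintype S] [Fintype A] (P : S → A → S → ℝ)
    (r : S → A → ℝ) (μ : S → ℝ) (γ : ℝ) (q : S → A → ℝ) (η : ℝ) (v : S → ℝ) : ℝ :=
  (1 - γ) * ∑ s, μ s * v s
    + (1 / η) * Real.log (∑ s, ∑ a, Real.exp (η * Adv P r γ v s a) * q s a) + 1 / η

/-- The feasible set `Λ` of normalized discounted state-action visitation measures. -/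
def Feasible {S A : Type*} [Fintype S] [Fintype A] (P : S → A → S → ℝ) (μ : S → ℝ)
    (γ : ℝ) : Set (S → A → ℝ) :=
  {l | (∀ s a, 0 ≤ l s a) ∧ (∑ s, ∑ a, l s a = 1) ∧
    ∀ s, ∑ a, l s a = (1 - γ) * μ s + γ * ∑ s', ∑ a, P s' a s * l s' a}

/-- The KL-regularized primal objective. -/
noncomputable def JP {S A : Type*} [Fintype S] [Fintype A] (r q : S → A → ℝ) (η : ℝ)
    (l : S → A → ℝ) : ℝ :=
  ∑ s, ∑ a, l s a * r s a - (1 / η) * ∑ s, ∑ a, l s a * (Real.log (l s a / q s a) - 1)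

/-- The candidate primal solution `λ^v_{s,a} = exp(η A^v_{s,a}) q_{s,a} / Z(v)`. -/
noncomputable def lamCand {S A : Type*} [Fintype S] [Fintype A] (P : S → A → S → ℝ)
    (r : S → A → ℝ) (γ : ℝ) (q : S → A → ℝ) (η : ℝ) (v : S → ℝ) (s : S) (a : A) : ℝ :=
  Real.exp (η * Adv P r γ v s a) * q s a /
    ∑ s', ∑ a', Real.exp (η * Adv P r γ v s' a') * q s' a'

/-! ### The flow residual -/

/-- The residual of the flow constraints at `l`; for `l = λ^v` it is the gradient of `J_D`
at `v`. -/
noncomputable def flowResid {S A : Type*} [Fintype S] [Fintype A] (P : S → A → S → ℝ) (μ : S → ℝ)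
    (γ : ℝ) (l : S → A → ℝ) (s : S) : ℝ :=
  (1 - γ) * μ s + γ * ∑ s', ∑ a, P s' a s * l s' a - ∑ a, l s a

/-- Summation by parts: the mean change of the advantage along `w` is the pairing of `w` with the
flow residual, up to the initial-distribution term. -/
lemma flow_swap {S A : Type*} [Fintype S] [Fintype A] (P : S → A → S → ℝ) (μ : S → ℝ)
    (γ : ℝ) (l : S → A → ℝ) (w : S → ℝ) :
    ∑ s, ∑ a, l s a * (-w s + γ * ∑ s', P s a s' * w s') =
      ∑ s, w s * flowResid P μ γ l s - (1 - γ) * ∑ s, μ s * w s := by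
  have h1 : ∑ s, ∑ a, l s a * (γ * ∑ s', P s a s' * w s')
      = ∑ s, w s * (γ * ∑ s', ∑ a, P s' a s * l s' a) := by
    have e1 : ∀ s a, l s a * (γ * ∑ s', P s a s' * w s')
        = ∑ s', γ * (w s' * (P s a s' * l s a)) := by
      intro s a
      rw [Finset.mul_sum, Finset.mul_sum]
      exact Finset.sum_congr rfl fun _ _ => by ring
    have e2 : ∀ s, w s * (γ * ∑ s', ∑ a, P s' a s * l s' a)
        = ∑ s', ∑ a, γ * (w s * (P s' a s * l s' a)) := by
      intro s
      simp only [Finset.mul_sum]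
      exact Finset.sum_congr rfl fun _ _ => Finset.sum_congr rfl fun _ _ => by ring
    simp only [e1, e2]
    conv_rhs => rw [Finset.sum_comm]
    exact Finset.sum_congr rfl fun _ _ => Finset.sum_comm
  have h2 : ∑ s, ∑ a, l s a * (-w s) = -∑ s, w s * ∑ a, l s a := by
    rw [← Finset.sum_neg_distrib]
    refine Finset.sum_congr rfl fun s _ => ?_
    rw [Finset.mul_sum, ← Finset.sum_neg_distrib]
    exact Finset.sum_congr rfl fun _ _ => by ring
  have h3 : ∑ s, w s * flowResid P μ γ l s = (1 - γ) * ∑ s, μ s * w s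
      + ∑ s, w s * (γ * ∑ s', ∑ a, P s' a s * l s' a) - ∑ s, w s * ∑ a, l s a := by
    rw [Finset.mul_sum, ← Finset.sum_add_distrib, ← Finset.sum_sub_distrib]
    refine Finset.sum_congr rfl fun s _ => ?_
    unfold flowResid
    ring
  simp only [mul_add, Finset.sum_add_distrib]
  rw [h1, h2, h3]
  ring

/-! ### A second-order exponential moment bound -/

lemma exp_le_quad {x : ℝ} (hx : |x| ≤ 2 / 3) : Real.exp x ≤ 1 + x + 3 / 4 * x ^ 2 := by
  have h := Real.exp_bound (x := x) (by linarith) (n := 3) (by norm_num)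
  have h2 := (abs_le.1 h).2
  simp only [Finset.sum_range_succ, Finset.sum_range_zero, Nat.factorial] at h2
  norm_num at h2
  have h3 : |x| ^ 3 ≤ x ^ 2 * (2 / 3) := by
    rw [pow_succ, sq_abs]
    exact mul_le_mul_of_nonneg_left hx (sq_nonneg x)
  nlinarith [sq_nonneg x]

/-- A second-order bound on the cumulant generating function of a small finite random variable. -/
lemma log_sum_exp_le {S A : Type*} [Fintype S] [Fintype A] (p X : S → A → ℝ)
    (hp : ∀ s a, 0 ≤ p s a) (hp1 : ∑ s, ∑ a, p s a = 1) (x : ℝ) (hx : x ≤ 2 / 3)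
    (hX : ∀ s a, |X s a| ≤ x) :
    Real.log (∑ s, ∑ a, p s a * Real.exp (X s a)) ≤ ∑ s, ∑ a, p s a * X s a + 3 / 4 * x ^ 2 := by
  have h1 : ∑ s, ∑ a, p s a * Real.exp (X s a)
      ≤ ∑ s, ∑ a, (p s a + p s a * X s a + p s a * (3 / 4 * x ^ 2)) := by
    refine Finset.sum_le_sum fun s _ => Finset.sum_le_sum fun a _ => ?_
    have h2 := exp_le_quad ((hX s a).trans hx)
    have h3 : X s a ^ 2 ≤ x ^ 2 := by
      rw [← sq_abs]
      exact pow_le_pow_left₀ (abs_nonneg _) (hX s a) 2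
    have h4 : Real.exp (X s a) ≤ 1 + X s a + 3 / 4 * x ^ 2 := by linarith
    have := mul_le_mul_of_nonneg_left h4 (hp s a)
    linarith
  simp only [Finset.sum_add_distrib, ← Finset.sum_mul, hp1] at h1
  have h0 : 0 < ∑ s, ∑ a, p s a * Real.exp (X s a) := by
    have h5 : ∑ s, ∑ a, p s a * Real.exp (-x) ≤ ∑ s, ∑ a, p s a * Real.exp (X s a) := by
      refine Finset.sum_le_sum fun s _ => Finset.sum_le_sum fun a _ => ?_
      exact mul_le_mul_of_nonneg_left (Real.exp_le_exp.2 (abs_le.1 (hX s a)).1) (hp s a)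
    simp only [← Finset.sum_mul, hp1] at h5
    have := Real.exp_pos (-x)
    linarith
  have := Real.log_le_sub_one_of_pos h0
  linarith

/-! ### Candidate solutions: duality gap and gradient of the dual -/

section candidate

variable {S A : Type*} [Fintype S] [Fintype A] [Nonempty S] [Nonempty A]
  (P : S → A → S → ℝ) (r : S → A → ℝ) (μ : S → ℝ) (γ : ℝ) (q : S → A → ℝ) (η : ℝ) (v : S → ℝ)

lemma partition_pos (hq : ∀ s a, 0 < q s a) : 0 < ∑ s, ∑ a, Real.exp (η * Adv P r γ v s a) * q s a :=
  Finset.sum_pos (fun s _ => Finset.sum_pos (fun a _ => mul_pos (Real.exp_pos _) (hq s a))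
    Finset.univ_nonempty) Finset.univ_nonempty

lemma lamCand_pos (hq : ∀ s a, 0 < q s a)
    (s : S) (a : A) : 0 < lamCand P r γ q η v s a :=
  div_pos (mul_pos (Real.exp_pos _) (hq s a)) (partition_pos P r γ q η v hq)

lemma lamCand_sum (hq : ∀ s a, 0 < q s a) : ∑ s, ∑ a, lamCand P r γ q η v s a = 1 := by
  unfold lamCand
  simp only [← Finset.sum_div]
  exact div_self (partition_pos P r γ q η v hq).ne'

lemma log_lamCand (hq : ∀ s a, 0 < q s a)
    (s : S) (a : A) : Real.log (lamCand P r γ q η v s a) =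
    η * Adv P r γ v s a + Real.log (q s a)
      - Real.log (∑ s, ∑ a, Real.exp (η * Adv P r γ v s a) * q s a) := by
  unfold lamCand
  rw [Real.log_div (mul_pos (Real.exp_pos _) (hq s a)).ne' (partition_pos P r γ q η v hq).ne',
    Real.log_mul (Real.exp_pos _).ne' (hq s a).ne', Real.log_exp]

/-- The change of `J_D` along `w`, as a cumulant generating function under `λ^v`. -/
lemma JD_add (hq : ∀ s a, 0 < q s a)
    (w : S → ℝ) : JD P r μ γ q η (fun s => v s + w s) - JD P r μ γ q η v =
    (1 - γ) * ∑ s, μ s * w s + (1 / η) * Real.log (∑ s, ∑ a, lamCand P r γ q η v s a *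
      Real.exp (η * (-w s + γ * ∑ s', P s a s' * w s'))) := by
  have hA : ∀ s a, Adv P r γ (fun s => v s + w s) s a =
      Adv P r γ v s a + (-w s + γ * ∑ s', P s a s' * w s') := by
    intro s a
    unfold Adv
    simp only [mul_add, Finset.sum_add_distrib]
    ring
  have hZ := partition_pos P r γ q η v hq
  have hZ' := partition_pos P r γ q η (fun s => v s + w s) hq
  have h1 : ∑ s, ∑ a, lamCand P r γ q η v s a *
      Real.exp (η * (-w s + γ * ∑ s', P s a s' * w s')) =
      (∑ s, ∑ a, Real.exp (η * Adv P r γ (fun s => v s + w s) s a) * q s a) /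
        ∑ s, ∑ a, Real.exp (η * Adv P r γ v s a) * q s a := by
    rw [Finset.sum_div]
    refine Finset.sum_congr rfl fun s _ => ?_
    rw [Finset.sum_div]
    refine Finset.sum_congr rfl fun a _ => ?_
    unfold lamCand
    rw [hA, mul_add η (Adv P r γ v s a), Real.exp_add]
    ring
  rw [h1, Real.log_div hZ'.ne' hZ.ne']
  unfold JD
  simp only [mul_add, Finset.sum_add_distrib]
  ring

/-- For feasible `l`, the duality gap is `1/η` times the relative entropy from `l` to `λ^v`. -/
lemma dual_sub_primal (hq : ∀ s a, 0 < q s a)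
    (hη : 0 < η) (l : S → A → ℝ) (hl : l ∈ Feasible P μ γ) :
    JD P r μ γ q η v - JP r q η l =
      (1 / η) * ∑ s, ∑ a, l s a * (Real.log (l s a) - Real.log (lamCand P r γ q η v s a)) := by
  obtain ⟨hl0, hl1, hlf⟩ := hl
  have hres : ∀ s, flowResid P μ γ l s = 0 := fun s => by
    unfold flowResid
    rw [hlf s]
    ring
  have hsw := flow_swap P μ γ l v
  simp only [hres, mul_zero, Finset.sum_const_zero, zero_sub] at hsw
  set Z := ∑ s, ∑ a, Real.exp (η * Adv P r γ v s a) * q s a with hZ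
  have hpt : ∀ s a, l s a * (Real.log (l s a) - Real.log (lamCand P r γ q η v s a)) =
      l s a * (Real.log (l s a / q s a) - 1) - η * (l s a * r s a)
        - η * (l s a * (-v s + γ * ∑ s', P s a s' * v s')) + l s a * (Real.log Z + 1) := by
    intro s a
    -- the zero entries contribute nothing on either side
    rcases (hl0 s a).eq_or_lt with h | h
    · simp [← h]
    · rw [log_lamCand P r γ q η v hq, Real.log_div h.ne' (hq s a).ne', ← hZ]
      unfold Adv
      ring
  simp only [hpt, Finset.sum_add_distrib, Finset.sum_sub_distrib, ← Finset.mul_sum,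
    ← Finset.sum_mul, hl1, hsw]
  unfold JD JP
  rw [← hZ]
  field_simp
  ring

/-- An `ε`-minimizer of the smooth function `J_D` has gradient of `ℓ¹` norm at most
`√(12ηε)`. -/
lemma flowResid_sq_le (hq : ∀ s a, 0 < q s a)
    (hP0 : ∀ s a s', 0 ≤ P s a s') (hP1 : ∀ s a, ∑ s', P s a s' = 1)
    (hμ0 : ∀ s, 0 ≤ μ s) (hμ1 : ∑ s, μ s = 1) (hγ : 0 < γ ∧ γ < 1) (hη : 0 < η) (ε : ℝ)
    (hopt : ∀ v', JD P r μ γ q η v ≤ JD P r μ γ q η v' + ε) :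
    (∑ s, |flowResid P μ γ (lamCand P r γ q η v) s|) ^ 2 ≤ 12 * η * ε := by
  have hl0 := fun s a => (lamCand_pos P r γ q η v hq s a).le
  have hl1 := lamCand_sum P r γ q η v hq
  have hJ := JD_add P r μ γ q η v hq
  set l := lamCand P r γ q η v with hl
  set g := flowResid P μ γ l with hg
  set G := ∑ s, |g s| with hG
  have hG0 : 0 ≤ G := Finset.sum_nonneg fun _ _ => abs_nonneg _
  have hin : ∑ s, ∑ s', ∑ a, P s' a s * l s' a = 1 := by
    rw [Finset.sum_comm, ← hl1]
    refine Finset.sum_congr rfl fun s' _ => ?_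
    rw [Finset.sum_comm]
    refine Finset.sum_congr rfl fun a _ => ?_
    rw [← Finset.sum_mul, hP1, one_mul]
  have hG2 : G ≤ 2 := by
    have h1 : G ≤ ∑ s, ((1 - γ) * μ s + γ * ∑ s', ∑ a, P s' a s * l s' a + ∑ a, l s a) := by
      refine Finset.sum_le_sum fun s _ => ?_
      have ha : 0 ≤ (1 - γ) * μ s := mul_nonneg (by linarith [hγ.2]) (hμ0 s)
      have hb : 0 ≤ γ * ∑ s', ∑ a, P s' a s * l s' a :=
        mul_nonneg hγ.1.le (Finset.sum_nonneg fun s' _ => Finset.sum_nonneg fun a _ =>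
          mul_nonneg (hP0 _ _ _) (hl0 _ _))
      have hc : 0 ≤ ∑ a, l s a := Finset.sum_nonneg fun a _ => hl0 s a
      rw [hg]
      unfold flowResid
      rw [abs_le]
      constructor <;> linarith
    simp only [Finset.sum_add_distrib, ← Finset.mul_sum, hμ1, hin, hl1] at h1
    linarith
  -- the minimizer of the quadratic upper model along the direction `-sign g`
  set t := G / (6 * η) with ht
  have ht0 : 0 ≤ t := by positivity
  let w : S → ℝ := fun s => -t * SignType.sign (g s)
  have hw : ∀ s, |w s| ≤ t := by
    intro s
    have : |((SignType.sign (g s) : SignType) : ℝ)| ≤ 1 := by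
      rcases lt_trichotomy (g s) 0 with h | h | h <;> simp [h]
    simp only [w, abs_mul, abs_neg, abs_of_nonneg ht0]
    nlinarith
  have hgw : ∑ s, w s * g s = -t * G := by
    rw [hG, Finset.mul_sum]
    refine Finset.sum_congr rfl fun s _ => ?_
    have := sign_mul_self (g s)
    simp only [w]
    rw [mul_assoc, this]
  have hPw : ∀ s a, |∑ s', P s a s' * w s'| ≤ t := by
    intro s a
    calc |∑ s', P s a s' * w s'| ≤ ∑ s', |P s a s' * w s'| := Finset.abs_sum_le_sum_abs _ _
      _ ≤ ∑ s', P s a s' * t := Finset.sum_le_sum fun s' _ => by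
          rw [abs_mul, abs_of_nonneg (hP0 s a s')]
          exact mul_le_mul_of_nonneg_left (hw s') (hP0 s a s')
      _ = t := by rw [← Finset.sum_mul, hP1, one_mul]
  have hηt : η * t = G / 6 := by rw [ht]; field_simp
  have hX : ∀ s a, |η * (-w s + γ * ∑ s', P s a s' * w s')| ≤ G / 3 := by
    intro s a
    rw [abs_mul, abs_of_pos hη]
    have h1 : |-w s + γ * ∑ s', P s a s' * w s'| ≤ 2 * t := by
      refine (abs_add_le _ _).trans ?_
      rw [abs_neg, abs_mul γ, abs_of_pos hγ.1]
      have := hw s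
      have := hPw s a
      nlinarith [hγ.2, abs_nonneg (∑ s', P s a s' * w s')]
    nlinarith [mul_le_mul_of_nonneg_left h1 hη.le]
  have hlog := log_sum_exp_le l (fun s a => η * (-w s + γ * ∑ s', P s a s' * w s')) hl0 hl1
    (G / 3) (by linarith) hX
  have hlin : ∑ s, ∑ a, l s a * (η * (-w s + γ * ∑ s', P s a s' * w s')) =
      η * (-t * G - (1 - γ) * ∑ s, μ s * w s) := by
    rw [← hgw, ← flow_swap P μ γ l w, Finset.mul_sum]
    refine Finset.sum_congr rfl fun s _ => ?_
    rw [Finset.mul_sum]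
    exact Finset.sum_congr rfl fun a _ => by ring
  rw [hlin] at hlog
  have h1 := hJ w
  have h2 := hopt (fun s => v s + w s)
  have h3 := mul_le_mul_of_nonneg_left hlog (one_div_pos.2 hη).le
  have h4 : -ε ≤ (1 - γ) * ∑ s, μ s * w s + (1 / η) *
      (η * (-t * G - (1 - γ) * ∑ s, μ s * w s) + 3 / 4 * (G / 3) ^ 2) := by linarith
  have h5 : (1 - γ) * ∑ s, μ s * w s + (1 / η) *
      (η * (-t * G - (1 - γ) * ∑ s, μ s * w s) + 3 / 4 * (G / 3) ^ 2) = -(G ^ 2 / (12 * η)) := by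
    rw [ht]
    field_simp
    ring
  rw [h5] at h4
  have h6 : G ^ 2 / (12 * η) ≤ ε := by linarith
  rw [div_le_iff₀ (by positivity)] at h6
  linarith

end candidate

/-! ### Stability of state marginals -/

/-- State marginals of two measures with a common policy `p`, one of which satisfies the flow
constraints, are close when the flow residual of the other is small. -/
lemma marginal_dist_le {S A : Type*} [Fintype S] [Fintype A]
    (P : S → A → S → ℝ) (hP0 : ∀ s a s', 0 ≤ P s a s') (hP1 : ∀ s a, ∑ s', P s a s' = 1)
    (μ : S → ℝ) (γ : ℝ) (hγ : 0 < γ) (p : S → A → ℝ) (hp0 : ∀ s a, 0 ≤ p s a)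
    (hp1 : ∀ s, ∑ a, p s a = 1) (l l' : S → A → ℝ)
    (hl : ∀ s a, l s a = (∑ a', l s a') * p s a)
    (hl' : ∀ s a, l' s a = (∑ a', l' s a') * p s a)
    (hfl : ∀ s, flowResid P μ γ l' s = 0) :
    (1 - γ) * ∑ s, |∑ a, l' s a - ∑ a, l s a| ≤ ∑ s, |flowResid P μ γ l s| := by
  set e : S → ℝ := fun s => ∑ a, l' s a - ∑ a, l s a with he
  have hrec : ∀ s, e s = γ * ∑ s', ∑ a, P s' a s * (p s' a * e s') + flowResid P μ γ l s := by
    intro s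
    have h1 : ∑ s', ∑ a, P s' a s * (p s' a * e s') =
        ∑ s', ∑ a, P s' a s * l' s' a - ∑ s', ∑ a, P s' a s * l s' a := by
      rw [← Finset.sum_sub_distrib]
      refine Finset.sum_congr rfl fun s' _ => ?_
      rw [← Finset.sum_sub_distrib]
      refine Finset.sum_congr rfl fun a _ => ?_
      rw [hl' s' a, hl s' a]
      simp only [he]
      ring
    have h2 := hfl s
    rw [h1]
    unfold flowResid at h2 ⊢
    simp only [he]
    linarith
  have hle : ∀ s, |e s| ≤ γ * ∑ s', ∑ a, P s' a s * (p s' a * |e s'|) +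
      |flowResid P μ γ l s| := by
    intro s
    conv_lhs => rw [hrec s]
    refine (abs_add_le _ _).trans (add_le_add_left ?_ _)
    rw [abs_mul, abs_of_pos hγ]
    refine mul_le_mul_of_nonneg_left ?_ hγ.le
    refine (Finset.abs_sum_le_sum_abs _ _).trans (Finset.sum_le_sum fun s' _ => ?_)
    refine (Finset.abs_sum_le_sum_abs _ _).trans (Finset.sum_le_sum fun a _ => ?_)
    rw [abs_mul, abs_mul, abs_of_nonneg (hP0 _ _ _), abs_of_nonneg (hp0 _ _)]
  have hsum := Finset.sum_le_sum fun s (_ : s ∈ Finset.univ) => hle s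
  have hmass : ∑ s, ∑ s', ∑ a, P s' a s * (p s' a * |e s'|) = ∑ s, |e s| := by
    rw [Finset.sum_comm]
    refine Finset.sum_congr rfl fun s' _ => ?_
    rw [Finset.sum_comm]
    simp only [← Finset.sum_mul, hP1, one_mul, hp1]
  rw [Finset.sum_add_distrib, ← Finset.mul_sum, hmass] at hsum
  linarith

/-! ### Suboptimality of the induced policy -/

/-- The tangent-line form of Gibbs' inequality. -/
lemma sub_le_mul_log {x y : ℝ} (hx : 0 ≤ x) (hy : 0 < y) :
    x - y ≤ x * (Real.log x - Real.log y) := by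
  rcases hx.eq_or_lt with h | h
  · simp [← h, hy.le]
  · have h1 := Real.log_le_sub_one_of_pos (div_pos hy h)
    rw [Real.log_div hy.ne' h.ne'] at h1
    have h2 := mul_le_mul_of_nonneg_left h1 hx
    have h3 : x * (y / x - 1) = y - x := by field_simp
    linarith

/-- an `ε`-optimal bounded dual solution of the REPS dual objective yields,
through its induced policy, a feasible visitation distribution whose regularized primal
value is within `(2√((|S|+1)ηε)/(1−γ))·(2 + (1 + log(|S||A|/(β²ρ⁴)))/η)` of the optimum. -/
theorem stmt_7 {S A : Type*} [Fintype S] [Fintype A] [Nonempty S] [Nonempty A]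
    (P : S → A → S → ℝ) (hP0 : ∀ s a s', 0 ≤ P s a s') (hP1 : ∀ s a, ∑ s', P s a s' = 1)
    (r : S → A → ℝ) (hr : ∀ s a, 0 ≤ r s a ∧ r s a ≤ 1)
    (μ : S → ℝ) (hμ0 : ∀ s, 0 ≤ μ s) (hμ1 : ∑ s, μ s = 1)
    (γ : ℝ) (hγ : 0 < γ ∧ γ < 1)
    (β : ℝ) (hβ : 0 < β)
    (q : S → A → ℝ) (hq : ∀ s a, β ≤ q s a) (hq1 : ∑ s, ∑ a, q s a = 1)
    (η : ℝ) (hη : 0 < η)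
    (ρ : ℝ) (hρ : 0 < ρ)
    (hvisit : ∀ l ∈ Feasible P μ γ, ∀ s, ρ ≤ ∑ a, l s a)
    (hS : 2 ≤ Fintype.card S)
    (hattain : ∃ vm : S → ℝ, ∀ v, JD P r μ γ q η vm ≤ JD P r μ γ q η v)
    (vt : S → ℝ) (ε : ℝ) (hε : 0 < ε)
    (hvt_bdd : (⨆ s, |vt s|) ≤ (1 / (1 - γ)) *
      (1 + Real.log ((Fintype.card S : ℝ) * (Fintype.card A : ℝ) / (β * ρ)) / η))
    (hvt_opt : ∀ v, JD P r μ γ q η vt ≤ JD P r μ γ q η v + ε)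
    (lam' : S → A → ℝ) (hlam'_mem : lam' ∈ Feasible P μ γ)
    (hlam'_pol : ∀ s a, lam' s a = (∑ a', lam' s a') *
      (lamCand P r γ q η vt s a / ∑ a', lamCand P r γ q η vt s a'))
    (lamstar : S → A → ℝ) (hstar_mem : lamstar ∈ Feasible P μ γ)
    (hstar_max : ∀ l ∈ Feasible P μ γ, JP r q η l ≤ JP r q η lamstar) :
    JP r q η lamstar -
      (2 * Real.sqrt (((Fintype.card S : ℝ) + 1) * η * ε) / (1 - γ)) *
        (2 + (1 + Real.log ((Fintype.card S : ℝ) * (Fintype.card A : ℝ) / (β ^ 2 * ρ ^ 4))) / η)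
      ≤ JP r q η lam' := by
  have hq0 : ∀ s a, 0 < q s a := fun s a => hβ.trans_le (hq s a)
  have hγ1 : 0 < 1 - γ := by linarith [hγ.2]
  have hdual := fun l hl => dual_sub_primal P r μ γ q η vt hq0 hη l hl
  have hGsq := flowResid_sq_le P r μ γ q η vt hq0 hP0 hP1 hμ0 hμ1 hγ hη ε hvt_opt
  have ht0 := lamCand_pos P r γ q η vt hq0
  have ht1 := lamCand_sum P r γ q η vt hq0
  have htlog := log_lamCand P r γ q η vt hq0
  set lt := lamCand P r γ q η vt with hlt
  set logZ := Real.log (∑ s, ∑ a, Real.exp (η * Adv P r γ vt s a) * q s a) with hlogZ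
  set g := flowResid P μ γ lt with hg
  set G := ∑ s, |g s| with hG
  have hG0 : 0 ≤ G := Finset.sum_nonneg fun _ _ => abs_nonneg _
  -- the common conditional policy of `lt` and `lam'`
  have hdt : ∀ s, 0 < ∑ a, lt s a := fun s =>
    Finset.sum_pos (fun a _ => ht0 s a) Finset.univ_nonempty
  obtain ⟨p, hp⟩ : ∃ p : S → A → ℝ, ∀ s a, p s a = lt s a / ∑ a', lt s a' := ⟨_, fun _ _ => rfl⟩
  have hp0 : ∀ s a, 0 < p s a := fun s a => by rw [hp]; exact div_pos (ht0 s a) (hdt s)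
  have hp1 : ∀ s, ∑ a, p s a = 1 := fun s => by
    simp only [hp, ← Finset.sum_div]
    exact div_self (hdt s).ne'
  have hple : ∀ s a, p s a ≤ 1 := fun s a => by
    rw [← hp1 s]
    exact Finset.single_le_sum (fun a _ => (hp0 s a).le) (Finset.mem_univ a)
  have htp : ∀ s a, lt s a = (∑ a', lt s a') * p s a := fun s a => by
    rw [hp, mul_div_cancel₀ _ (hdt s).ne']
  have hlp : ∀ s a, lam' s a = (∑ a', lam' s a') * p s a := fun s a => by
    rw [hp]; exact hlam'_pol s a
  have hd' := hvisit lam' hlam'_mem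
  have hd'0 : ∀ s, 0 < ∑ a, lam' s a := fun s => hρ.trans_le (hd' s)
  have hl'0 : ∀ s a, 0 < lam' s a := fun s a => by
    rw [hlp]; exact mul_pos (hd'0 s) (hp0 s a)
  have hl'1 := hlam'_mem.2.1
  have hd'1 : ∀ s, ∑ a, lam' s a ≤ 1 := fun s => by
    rw [← hl'1]
    exact Finset.single_le_sum (f := fun s => ∑ a, lam' s a) (fun s _ => (hd'0 s).le)
      (Finset.mem_univ s)
  have hl'res : ∀ s, flowResid P μ γ lam' s = 0 := fun s => by
    unfold flowResid
    rw [hlam'_mem.2.2 s]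
    ring
  have hE := marginal_dist_le P hP0 hP1 μ γ hγ.1 p (fun s a => (hp0 s a).le) hp1 lt lam' htp hlp
    hl'res
  set e : S → ℝ := fun s => ∑ a, lam' s a - ∑ a, lt s a with he
  change (1 - γ) * ∑ s, |e s| ≤ G at hE
  -- weak duality: the gap of `lamstar` is a nonnegative relative entropy
  have hweak : JP r q η lamstar ≤ JD P r μ γ q η vt := by
    have h1 := hdual lamstar hstar_mem
    have h2 : 0 ≤ ∑ s, ∑ a, lamstar s a * (Real.log (lamstar s a) - Real.log (lt s a)) := by
      have h3 : ∑ s, ∑ a, (lamstar s a - lt s a) ≤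
          ∑ s, ∑ a, lamstar s a * (Real.log (lamstar s a) - Real.log (lt s a)) :=
        Finset.sum_le_sum fun s _ => Finset.sum_le_sum fun a _ =>
          sub_le_mul_log (hstar_mem.1 s a) (ht0 s a)
      simp only [Finset.sum_sub_distrib, hstar_mem.2.1, ht1, sub_self] at h3
      exact h3
    have := mul_nonneg (one_div_pos.2 hη).le h2
    linarith
  -- adding the reverse relative entropy symmetrizes the gap
  have hsym : ∑ s, ∑ a, lam' s a * (Real.log (lam' s a) - Real.log (lt s a)) ≤
      ∑ s, ∑ a, (lam' s a - lt s a) * (Real.log (lam' s a) - Real.log (lt s a)) := by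
    have h3 : ∑ s, ∑ a, (lt s a - lam' s a) ≤
        ∑ s, ∑ a, lt s a * (Real.log (lt s a) - Real.log (lam' s a)) :=
      Finset.sum_le_sum fun s _ => Finset.sum_le_sum fun a _ =>
        sub_le_mul_log (ht0 s a).le (hl'0 s a)
    simp only [Finset.sum_sub_distrib, hl'1, ht1, sub_self] at h3
    have h4 : ∑ s, ∑ a, (lam' s a - lt s a) * (Real.log (lam' s a) - Real.log (lt s a)) =
        ∑ s, ∑ a, lam' s a * (Real.log (lam' s a) - Real.log (lt s a)) +
        ∑ s, ∑ a, lt s a * (Real.log (lt s a) - Real.log (lam' s a)) := by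
      simp only [← Finset.sum_add_distrib]
      exact Finset.sum_congr rfl fun s _ => Finset.sum_congr rfl fun a _ => by ring
    linarith
  obtain ⟨H, hH⟩ : ∃ H : S → ℝ, ∀ s, H s = ∑ a, p s a *
      (Real.log (∑ a', lam' s a') + (Real.log (p s a) - Real.log (q s a)) - η * r s a) :=
    ⟨_, fun _ => rfl⟩
  have hexp : ∑ s, ∑ a, (lam' s a - lt s a) * (Real.log (lam' s a) - Real.log (lt s a)) =
      ∑ s, e s * H s + η * ∑ s, vt s * g s := by
    have hpt : ∀ s a, (lam' s a - lt s a) * (Real.log (lam' s a) - Real.log (lt s a)) =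
        e s * (p s a *
          (Real.log (∑ a', lam' s a') + (Real.log (p s a) - Real.log (q s a)) - η * r s a))
        - η * (lam' s a * (-vt s + γ * ∑ s', P s a s' * vt s'))
        + η * (lt s a * (-vt s + γ * ∑ s', P s a s' * vt s'))
        + (lam' s a * logZ - lt s a * logZ) := by
      intro s a
      have h1 : Real.log (lam' s a) = Real.log (∑ a', lam' s a') + Real.log (p s a) := by
        conv_lhs => rw [hlp s a]
        exact Real.log_mul (hd'0 s).ne' (hp0 s a).ne'
      have h2 : e s * p s a = lam' s a - lt s a := by
        rw [hlp s a, htp s a]; simp only [he]; ring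
      rw [h1, htlog s a, ← mul_assoc (e s), h2]
      unfold Adv
      ring
    have hv' := flow_swap P μ γ lam' vt
    have hvt := flow_swap P μ γ lt vt
    simp only [hl'res, mul_zero, Finset.sum_const_zero, zero_sub] at hv'
    simp only [hpt, Finset.sum_add_distrib, Finset.sum_sub_distrib, ← Finset.mul_sum,
      ← Finset.sum_mul, hl'1, ht1, hv', hvt, ← hH, ← hg]
    ring
  have hρ1 : ρ ≤ 1 := (hd' (Classical.arbitrary S)).trans (hd'1 _)
  have hqs : ∀ s, ∑ a, q s a ≤ 1 := fun s => by
    rw [← hq1]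
    exact Finset.single_le_sum (f := fun s => ∑ a, q s a)
      (fun s _ => Finset.sum_nonneg fun a _ => (hq0 s a).le) (Finset.mem_univ s)
  have hβ1 : β ≤ 1 := by
    have s := Classical.arbitrary S
    have a := Classical.arbitrary A
    exact (hq s a).trans ((Finset.single_le_sum (fun a _ => (hq0 s a).le)
      (Finset.mem_univ a)).trans (hqs s))
  have hlβ : Real.log β ≤ 0 := Real.log_nonpos hβ.le hβ1
  have hlρ : Real.log ρ ≤ 0 := Real.log_nonpos hρ.le hρ1
  set K := η - Real.log β - Real.log ρ with hK
  have hHK : ∀ s, |H s| ≤ K := by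
    intro s
    have hld1 : Real.log (∑ a', lam' s a') ≤ 0 := Real.log_nonpos (hd'0 s).le (hd'1 s)
    have hld2 : Real.log ρ ≤ Real.log (∑ a', lam' s a') := Real.log_le_log hρ (hd' s)
    rw [abs_le]
    constructor
    · have h1 : ∑ a, (p s a * (Real.log ρ - η) + (p s a - q s a)) ≤ H s := by
        rw [hH]
        refine Finset.sum_le_sum fun a _ => ?_
        have h2 := sub_le_mul_log (hp0 s a).le (hq0 s a)
        have h3 : p s a * (Real.log ρ - η) ≤
            p s a * (Real.log (∑ a', lam' s a') - η * r s a) := by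
          refine mul_le_mul_of_nonneg_left ?_ (hp0 s a).le
          nlinarith [(hr s a).2]
        linarith
      simp only [Finset.sum_add_distrib, Finset.sum_sub_distrib, ← Finset.sum_mul, hp1] at h1
      linarith [hqs s]
    · have h1 : H s ≤ ∑ a, p s a * (-Real.log β) := by
        rw [hH]
        refine Finset.sum_le_sum fun a _ => mul_le_mul_of_nonneg_left ?_ (hp0 s a).le
        have h2 := Real.log_nonpos (hp0 s a).le (hple s a)
        have h3 := Real.log_le_log hβ (hq s a)
        have h4 := mul_nonneg hη.le (hr s a).1
        linarith
      rw [← Finset.sum_mul, hp1] at h1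
      linarith
  have hK0 : 0 ≤ K := by linarith
  have hT1 : ∑ s, e s * H s ≤ K * ∑ s, |e s| := by
    rw [Finset.mul_sum]
    refine Finset.sum_le_sum fun s _ => ?_
    calc e s * H s ≤ |e s * H s| := le_abs_self _
      _ = |H s| * |e s| := by rw [abs_mul, mul_comm]
      _ ≤ K * |e s| := mul_le_mul_of_nonneg_right (hHK s) (abs_nonneg _)
  set D := (1 / (1 - γ)) *
      (1 + Real.log ((Fintype.card S : ℝ) * (Fintype.card A : ℝ) / (β * ρ)) / η) with hD
  have hvD : ∀ s, |vt s| ≤ D := fun s =>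
    (le_ciSup (f := fun s => |vt s|) (Set.finite_range _).bddAbove s).trans hvt_bdd
  have hD0 : 0 ≤ D := (abs_nonneg _).trans (hvD (Classical.arbitrary S))
  have hT2 : ∑ s, vt s * g s ≤ D * G := by
    rw [hG, Finset.mul_sum]
    refine Finset.sum_le_sum fun s _ => ?_
    calc vt s * g s ≤ |vt s * g s| := le_abs_self _
      _ = |vt s| * |g s| := abs_mul _ _
      _ ≤ D * |g s| := mul_le_mul_of_nonneg_right (hvD s) (abs_nonneg _)
  set R := 2 * Real.sqrt (((Fintype.card S : ℝ) + 1) * η * ε) with hR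
  have hS' : (2 : ℝ) ≤ Fintype.card S := by exact_mod_cast hS
  have hGR : G ≤ R := by
    refine abs_le_of_sq_le_sq' ?_ (by positivity) |>.2
    rw [hR, mul_pow, Real.sq_sqrt (by positivity)]
    nlinarith [mul_pos hη hε]
  have hER : ∑ s, |e s| ≤ R / (1 - γ) := by
    rw [le_div_iff₀ hγ1]
    linarith
  have hgap : JD P r μ γ q η vt - JP r q η lam' ≤ (1 / η) * (K * (R / (1 - γ)) + η * (D * R)) := by
    rw [hdual lam' hlam'_mem]
    refine mul_le_mul_of_nonneg_left ?_ (one_div_pos.2 hη).le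
    have h1 := mul_le_mul_of_nonneg_left hER hK0
    have h2 := mul_le_mul_of_nonneg_left hGR hD0
    have h3 := mul_le_mul_of_nonneg_left (hT2.trans h2) hη.le
    linarith
  have hSpos : (0 : ℝ) < Fintype.card S := by linarith
  have hApos : (0 : ℝ) < Fintype.card A := by exact_mod_cast Fintype.card_pos
  have hSA := mul_pos hSpos hApos
  have hlog1 : Real.log ((Fintype.card S : ℝ) * (Fintype.card A : ℝ) / (β * ρ)) =
      Real.log ((Fintype.card S : ℝ) * (Fintype.card A : ℝ)) - Real.log β - Real.log ρ := by
    rw [Real.log_div hSA.ne' (by positivity), Real.log_mul hβ.ne' hρ.ne']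
    ring
  have hlog2 : Real.log ((Fintype.card S : ℝ) * (Fintype.card A : ℝ) / (β ^ 2 * ρ ^ 4)) =
      Real.log ((Fintype.card S : ℝ) * (Fintype.card A : ℝ)) - 2 * Real.log β
        - 4 * Real.log ρ := by
    rw [Real.log_div hSA.ne' (by positivity), Real.log_mul (pow_pos hβ 2).ne' (pow_pos hρ 4).ne',
      Real.log_pow, Real.log_pow]
    push_cast
    ring
  rw [hlog2]
  rw [hlog1] at hD
  set M := Real.log ((Fintype.card S : ℝ) * (Fintype.card A : ℝ))
  have hfin : (1 / η) * (K * (R / (1 - γ)) + η * (D * R)) =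
      R / (1 - γ) * (2 + (M - 2 * Real.log β - 2 * Real.log ρ) / η) := by
    rw [hD, hK]
    field_simp
    ring
  have hcmp : R / (1 - γ) * (2 + (M - 2 * Real.log β - 2 * Real.log ρ) / η) ≤
      R / (1 - γ) * (2 + (1 + (M - 2 * Real.log β - 4 * Real.log ρ)) / η) := by
    refine mul_le_mul_of_nonneg_left ?_ (by positivity)
    have : (M - 2 * Real.log β - 2 * Real.log ρ) / η ≤
        (1 + (M - 2 * Real.log β - 4 * Real.log ρ)) / η :=
      div_le_div_of_nonneg_right (by linarith) hη.le
    linarith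
  linarith
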